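/- Let l ≥ 0 be an integer, P : ℝⁿ → ℝ a harmonic polynomial homogeneous of degree l, and Y its restriction to S^{n-1}. Then for all 0 ≤ r < 1 and ζ ∈ S^{n-1}, ∫_{S^{n-1}} P_h(rζ,ξ) Y(ξ) dσ(ξ) = f_l(r²) r^l Y(ζ). -/

import Mathlib

/-!
Both sides of the identity, as functions of `x = rζ` in the ball, are `H`-harmonic and have the same
boundary values `Y`, so they agree by the maximum principle.

`H`-harmonicity is used in the classical form `IsHH`: continuity in the ball together with
`(1-|x|²)Δu + 2(n-2)⟨x,∇u⟩ = 0`. The weak maximum principle `IsHH.max_principle` holds for it, hence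
a solution tending to zero uniformly at the sphere vanishes (`IsHH.eq_zero`).

* The Poisson integral is a solution by differentiation under the integral sign (`isHH_integral`);
  the pointwise computation reduces to the sums `∑(∂ᵢq)²`, `Δq` and `⟨x,∇q⟩` of
  `q = (1-|x|²)/|x-ξ|²` (`pq_sums`).
* `F_l(|x|²)P(x)` is a solution (`isHH_solid`): with Euler's identity `⟨x,∇P⟩ = lP` and `ΔP = 0` the
  equation becomes the hypergeometric equation for `F_l` in the variable `|x|²` (`Fl_ode`).
* The kernel is positive and concentrates at `ζ` as `x → ζ`, and its total mass is one (`Ph_mass`): the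
  mass is a radial solution by rotation invariance of `σ`, so the maximum principle makes it constant.
  Therefore Poisson integrals attain their boundary values uniformly (`Ph_boundary`), while
  `F_l(R²)Rˡ → F_l(1)` as `R → 1` because the hypergeometric series converges absolutely at `1`
  (`hgc_summable`, `tendsto_radial`).

Rather than evaluating `F_l(1)` by Gauss's formula, the case `F_l(1) = 0` is handled directly: then
`F_l(|x|²)P(x)` has zero boundary values, so it vanishes in the ball and `P = 0` on the sphere
(`zero_of_Fl_one_eq_zero`), in which case the identity is trivial.
-/

open MeasureTheory Metric Filter Topology Set
open scoped ContDiff ENNReal NNReal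

noncomputable section

/-- `E n` is the Euclidean space `ℝⁿ`. -/
abbrev E (n : ℕ) := EuclideanSpace ℝ (Fin n)

/-- The normalized surface measure `σ` on the unit sphere `S^{n-1}` (total mass `1`). -/
noncomputable def sphMeasure (n : ℕ) : Measure (E n) :=
  ((μH[(n : ℝ) - 1] (sphere (0 : E n) 1))⁻¹) • ((μH[(n : ℝ) - 1]).restrict (sphere (0 : E n) 1))

/-- The Euclidean Laplacian `Δu(x) = Σ ∂²u/∂x_i²`. -/
noncomputable def lap (n : ℕ) (u : E n → ℝ) (x : E n) : ℝ :=
  ∑ i : Fin n, fderiv ℝ (fun y => fderiv ℝ u y (EuclideanSpace.single i 1)) x (EuclideanSpace.single i 1)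

/-- The normal derivation operator `Nu(x) = Σ x_i ∂u/∂x_i(x)`, i.e. the derivative of `u`
at `x` in the direction `x`. -/
noncomputable def Nder (n : ℕ) (u : E n → ℝ) (x : E n) : ℝ := fderiv ℝ u x x

/-- `u` is `H`-harmonic on `B_n` :
`Du(x) = (1-|x|²)²Δu(x) + 2(n-2)(1-|x|²)Nu(x) = 0` on the unit ball. -/
def HHarmonic (n : ℕ) (u : E n → ℝ) : Prop :=
  ∀ x ∈ ball (0 : E n) 1,
    (1 - ‖x‖ ^ 2) ^ 2 * lap n u x + 2 * ((n : ℝ) - 2) * (1 - ‖x‖ ^ 2) * Nder n u x = 0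

/-- The hyperbolic Poisson kernel `P_h(x,ξ) = ((1-|x|²)/|x-ξ|²)^{n-1}`. -/
noncomputable def Ph (n : ℕ) (x ξ : E n) : ℝ := ((1 - ‖x‖ ^ 2) / ‖x - ξ‖ ^ 2) ^ (n - 1)

/-- The Euclidean Poisson kernel `P_e(x,ξ) = (1-|x|²)/|x-ξ|ⁿ`. -/
noncomputable def Pe (n : ℕ) (x ξ : E n) : ℝ := (1 - ‖x‖ ^ 2) / ‖x - ξ‖ ^ n

/-- `u` has a boundary distribution : for every smooth `Φ` on the sphere,
`∫ u(rζ)Φ(ζ)dσ(ζ)` has a finite limit as `r → 1⁻`. -/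
def HasBoundaryDistribution (n : ℕ) (u : E n → ℝ) : Prop :=
  ∀ Φ : E n → ℝ, ContDiff ℝ ∞ Φ →
    ∃ L : ℝ, Tendsto (fun r : ℝ => ∫ ζ, u (r • ζ) * Φ ζ ∂(sphMeasure n)) (𝓝[<] (1 : ℝ)) (𝓝 L)

/-- `F_l(x) = ₂F₁(l, 1−n/2, l+n/2; x) = Σ_k (l)_k (1−n/2)_k / ((l+n/2)_k k!) xᵏ`. -/
noncomputable def Fl (n l : ℕ) (x : ℝ) : ℝ :=
  ∑' k : ℕ, ((ascPochhammer ℝ k).eval (l : ℝ) * (ascPochhammer ℝ k).eval (1 - (n : ℝ) / 2)) /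
      ((ascPochhammer ℝ k).eval ((l : ℝ) + (n : ℝ) / 2) * (Nat.factorial k)) * x ^ k

/-! ### The surface measure on the sphere -/

/-- The sphere has finite `m`-dimensional Hausdorff measure: it is covered by the radial projections
of the faces `xᵢ = ±1` of the cube, and these are Lipschitz images of compact cubes of `ℝᵐ`. -/
theorem hausdorff_sphere_lt_top (m : ℕ) :
    μH[(m : ℝ)] (sphere (0 : E (m + 1)) 1) < ⊤ := by
  -- `z i s` parametrizes the hyperplane `xᵢ = s`, and `f i s` projects it radially to the sphere
  let z : Fin (m + 1) → ℝ → (Fin m → ℝ) → E (m + 1) :=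
    fun i s y => WithLp.toLp 2 (Fin.insertNth (α := fun _ => ℝ) i s y)
  let f : Fin (m + 1) → ℝ → (Fin m → ℝ) → E (m + 1) := fun i s y => ‖z i s y‖⁻¹ • z i s y
  have hzi : ∀ i s y, z i s y i = s := by intro i s y; simp [z]
  have hz0 : ∀ i s y, s ≠ 0 → z i s y ≠ 0 := by
    intro i s y hs h
    apply hs
    rw [← hzi i s y, h]; rfl
  have hzc : ∀ i s, ContDiff ℝ 1 (z i s) := by
    intro i s
    rw [contDiff_euclidean]
    intro j
    refine Fin.succAboveCases i ?_ (fun k => ?_) j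
    · rw [funext (hzi i s)]; exact contDiff_const
    · have : (fun y => z i s y (i.succAbove k)) = fun y => y k := by
        funext y; simp [z]
      rw [this]; exact contDiff_apply ℝ ℝ k
  have hfc : ∀ i s, s ≠ 0 → ContDiff ℝ 1 (f i s) := by
    intro i s hs
    have h := hzc i s
    exact ((h.norm ℝ (fun y => hz0 i s y hs)).inv
      (fun y => norm_ne_zero_iff.2 (hz0 i s y hs))).smul h
  have hfin : ∀ i s, s ≠ 0 → μH[(m : ℝ)] (f i s '' closedBall 0 1) < ⊤ := by
    intro i s hs
    obtain ⟨K, hK⟩ := ((hfc i s hs).locallyLipschitz.locallyLipschitzOn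
      (s := closedBall 0 1)).exists_lipschitzOnWith_of_compact (isCompact_closedBall _ _)
    refine (hK.hausdorffMeasure_image_le (Nat.cast_nonneg m)).trans_lt ?_
    refine ENNReal.mul_lt_top (by simp) ?_
    have : (μH[(m : ℝ)] : Measure (Fin m → ℝ)) = volume := by
      simpa using hausdorffMeasure_pi_real (ι := Fin m)
    rw [this]
    exact measure_closedBall_lt_top
  have hcov : sphere (0 : E (m + 1)) 1 ⊆
      ⋃ i : Fin (m + 1), (f i 1 '' closedBall 0 1 ∪ f i (-1) '' closedBall 0 1) := by
    intro x hx
    have hx1 : ‖x‖ = 1 := by simpa using hx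
    -- a coordinate of largest modulus determines a face containing a multiple of `x`
    obtain ⟨i, -, hi⟩ := Finset.exists_max_image Finset.univ (fun j => |x j|)
      ⟨0, Finset.mem_univ _⟩
    have hi0 : 0 < |x i| := by
      by_contra h
      have : x = 0 := by
        ext j
        have := hi j (Finset.mem_univ _)
        have h3 : |x j| ≤ 0 := by linarith
        simpa using h3
      rw [this] at hx1; simp at hx1
    let y : Fin m → ℝ := fun k => |x i|⁻¹ * x (i.succAbove k)
    have hy : y ∈ closedBall (0 : Fin m → ℝ) 1 := by
      rw [mem_closedBall_zero_iff, pi_norm_le_iff_of_nonneg zero_le_one]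
      intro k
      simp only [y, Real.norm_eq_abs, abs_mul, abs_inv, abs_abs]
      rw [inv_mul_le_one₀ hi0]
      exact hi _ (Finset.mem_univ _)
    have key : ∀ s, s * |x i| = x i → f i s y = x := by
      intro s hs
      have hzx : z i s y = |x i|⁻¹ • x := by
        ext j
        refine Fin.succAboveCases i ?_ (fun k => ?_) j
        · rw [hzi, PiLp.smul_apply, smul_eq_mul, ← hs, abs_mul, abs_abs]
          have : |s| = 1 := by
            have h1 : |s| * |x i| = |x i| := by
              conv_rhs => rw [← hs, abs_mul, abs_abs]
            exact mul_right_cancel₀ hi0.ne' (h1.trans (one_mul _).symm)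
          rw [this]; field_simp
        · simp [z, y]
      simp only [f, hzx, norm_smul, hx1, norm_inv, Real.norm_eq_abs, abs_abs, mul_one, inv_inv,
        smul_smul]
      rw [mul_inv_cancel₀ hi0.ne', one_smul]
    refine mem_iUnion.2 ⟨i, ?_⟩
    rcases le_total 0 (x i) with h | h
    · exact Or.inl ⟨y, hy, key 1 (by rw [abs_of_nonneg h, one_mul])⟩
    · exact Or.inr ⟨y, hy, key (-1) (by rw [abs_of_nonpos h]; ring)⟩
  refine (measure_mono hcov).trans_lt ?_
  refine (measure_iUnion_le _).trans_lt ?_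
  rw [tsum_fintype]
  refine ENNReal.sum_lt_top.2 fun i _ => ?_
  exact (measure_union_le _ _).trans_lt
    (ENNReal.add_lt_top.2 ⟨hfin i 1 one_ne_zero, hfin i (-1) (by norm_num)⟩)

/-- The sphere has positive `m`-dimensional Hausdorff measure: dropping the last coordinate is a
`1`-Lipschitz map for the sup norm on `ℝᵐ`, and its image contains the open Euclidean unit ball. -/
theorem hausdorff_sphere_pos (m : ℕ) :
    0 < μH[(m : ℝ)] (sphere (0 : E (m + 1)) 1) := by
  let p : E (m + 1) → (Fin m → ℝ) := fun x k => x k.castSucc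
  have hp : LipschitzWith 1 p := by
    refine LipschitzWith.of_dist_le_mul fun x y => ?_
    rw [NNReal.coe_one, one_mul, dist_pi_le_iff dist_nonneg]
    intro k
    rw [dist_eq_norm, dist_eq_norm]
    exact PiLp.norm_apply_le (x - y) k.castSucc
  have hvol : (μH[(m : ℝ)] : Measure (Fin m → ℝ)) = volume := by
    simpa using hausdorffMeasure_pi_real (ι := Fin m)
  let q : (Fin m → ℝ) → ℝ := fun y => ∑ k, y k ^ 2
  have hq : Continuous q := by fun_prop
  have hsub : {y | q y < 1} ⊆ p '' sphere (0 : E (m + 1)) 1 := by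
    intro y hy
    have hy' : q y < 1 := hy
    refine ⟨WithLp.toLp 2 (Fin.snoc (α := fun _ => ℝ) y (√(1 - q y))), ?_, ?_⟩
    · rw [mem_sphere_zero_iff_norm, EuclideanSpace.norm_eq, Real.sqrt_eq_one]
      rw [Fin.sum_univ_castSucc]
      simp only [Real.norm_eq_abs, sq_abs, Fin.snoc_castSucc, Fin.snoc_last]
      rw [Real.sq_sqrt (by linarith)]
      simp [q]
    · ext k; simp [p]
  have hpos : 0 < (volume : Measure (Fin m → ℝ)) {y | q y < 1} := by
    refine IsOpen.measure_pos _ (isOpen_lt hq continuous_const) ⟨0, ?_⟩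
    simp [q]
  have h := hp.hausdorffMeasure_image_le (Nat.cast_nonneg m) (sphere (0 : E (m + 1)) 1)
  simp only [ENNReal.coe_one, ENNReal.one_rpow, one_mul] at h
  refine lt_of_lt_of_le ?_ h
  rw [hvol]
  exact hpos.trans_le (measure_mono hsub)

/-- The normalizing constant in `sphMeasure` is neither `0⁻¹` nor `⊤⁻¹`, so the total mass is `1`. -/
theorem sphMeasure_prob (n : ℕ) (hn : 1 ≤ n) : IsProbabilityMeasure (sphMeasure n) := by
  obtain ⟨m, rfl⟩ := Nat.exists_eq_add_of_le' hn
  constructor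
  have h1 := (hausdorff_sphere_pos m).ne'
  have h2 := (hausdorff_sphere_lt_top m).ne
  have e : ((m + 1 : ℕ) : ℝ) - 1 = m := by push_cast; ring
  rw [sphMeasure, e, Measure.smul_apply, Measure.restrict_apply_univ, smul_eq_mul,
    ENNReal.inv_mul_cancel h1 h2]

theorem sphMeasure_ae (n : ℕ) : ∀ᵐ ξ ∂(sphMeasure n), ξ ∈ sphere (0 : E n) 1 := by
  refine Measure.ae_smul_measure ?_ _
  exact ae_restrict_mem isClosed_sphere.measurableSet

/-- Rotation invariance of `σ`. -/
theorem sphMeasure_map (n : ℕ) (T : E n ≃ₗᵢ[ℝ] E n) :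
    MeasurePreserving T (sphMeasure n) (sphMeasure n) := by
  have h := (T.toIsometryEquiv.measurePreserving_hausdorffMeasure ((n : ℝ) - 1)).restrict_preimage
    (s := sphere (0 : E n) 1) isClosed_sphere.measurableSet
  have e : T.toIsometryEquiv ⁻¹' sphere (0 : E n) 1 = sphere (0 : E n) 1 := by
    ext x; simp
  rw [e] at h
  exact h.smul_measure _

/-! ### The equation and the maximum principle -/

/-- Classical form of `H`-harmonicity: `u` is continuous on the open unit ball, has partial
derivatives `∂ᵢu = d1 i`, `∂ᵢ∂ᵢu = d2 i` there, and satisfies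
`(1-|x|²)Δu + 2(n-2)⟨x,∇u⟩ = 0`, which is the equation of `HHarmonic` divided by `1-|x|²`. The
partial derivatives are encoded as one-variable derivatives along the coordinate lines, which are
all that the maximum principle needs and what differentiation under the integral provides. -/
def IsHH (n : ℕ) (u : E n → ℝ) : Prop :=
  ContinuousOn u (ball 0 1) ∧ ∃ d1 d2 : Fin n → E n → ℝ,
    (∀ x ∈ ball (0 : E n) 1, ∀ i,
      HasDerivAt (fun t : ℝ => u (x + t • EuclideanSpace.single i (1 : ℝ))) (d1 i x) 0 ∧
      HasDerivAt (fun t : ℝ => d1 i (x + t • EuclideanSpace.single i (1 : ℝ))) (d2 i x) 0) ∧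
    ∀ x ∈ ball (0 : E n) 1,
      (1 - ‖x‖ ^ 2) * ∑ i, d2 i x + 2 * ((n : ℝ) - 2) * ∑ i, x i * d1 i x = 0

theorem IsHH.lin {n : ℕ} {u v : E n → ℝ} (hu : IsHH n u) (hv : IsHH n v) (a b : ℝ) :
    IsHH n (fun x => a * u x + b * v x) := by
  obtain ⟨hc, d1, d2, hd, he⟩ := hu
  obtain ⟨kc, k1, k2, kd, ke⟩ := hv
  refine ⟨(hc.const_mul a).add (kc.const_mul b), fun i x => a * d1 i x + b * k1 i x,
    fun i x => a * d2 i x + b * k2 i x, fun x hx i => ⟨?_, ?_⟩, fun x hx => ?_⟩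
  · exact ((hd x hx i).1.const_mul a).add ((kd x hx i).1.const_mul b)
  · exact ((hd x hx i).2.const_mul a).add ((kd x hx i).2.const_mul b)
  · have h1 := he x hx
    have h2 := ke x hx
    simp only [mul_add, Finset.sum_add_distrib, mul_left_comm _ a, mul_left_comm _ b,
      ← Finset.mul_sum]
    linear_combination a * h1 + b * h2

/-- The necessary conditions at an interior maximum, with the second derivative assumed to exist
only at the point itself. -/
theorem second_deriv_test {g g1 : ℝ → ℝ} {c : ℝ} (hd : ∀ᶠ t in 𝓝 0, HasDerivAt g (g1 t) t)
    (h2 : HasDerivAt g1 c 0) (hmax : IsLocalMax g 0) : g1 0 = 0 ∧ c ≤ 0 := by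
  have h0 : g1 0 = 0 := hmax.hasDerivAt_eq_zero hd.self_of_nhds
  refine ⟨h0, ?_⟩
  by_contra! hc
  have hev : deriv g =ᶠ[𝓝 0] g1 := hd.mono fun t ht => ht.deriv
  have hdd : deriv (deriv g) 0 = c := by rw [hev.deriv_eq, h2.deriv]
  -- with a positive second derivative the maximum is also a minimum, so `g` is locally constant
  have hmin : IsLocalMin g 0 := isLocalMin_of_deriv_deriv_pos (by rw [hdd]; exact hc)
    (by rw [hev.self_of_nhds, h0]) hd.self_of_nhds.continuousAt
  have hconst : g =ᶠ[𝓝 0] fun _ => g 0 := by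
    filter_upwards [hmax, hmin] with t h1 h2 using le_antisymm h1 h2
  have h3 : deriv g =ᶠ[𝓝 0] fun _ => 0 := by
    have := hconst.deriv
    simpa using this
  have h4 := h3.deriv_eq
  rw [hdd] at h4
  simp at h4
  linarith

theorem norm_add_single_sq {n : ℕ} (x : E n) (i : Fin n) (t : ℝ) :
    ‖x + t • EuclideanSpace.single i (1 : ℝ)‖ ^ 2 = ‖x‖ ^ 2 + 2 * t * x i + t ^ 2 := by
  rw [norm_add_sq_real, inner_smul_right, EuclideanSpace.inner_single_right, norm_smul]
  simp
  ring

/-- A partial derivative given at `t = 0` for every base point of the ball is also the derivative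
along the coordinate line through `x` at all small `t`. -/
theorem IsHH.line {n : ℕ} {u : E n → ℝ} {d : E n → ℝ} {i : Fin n}
    (h : ∀ x ∈ ball (0 : E n) 1,
      HasDerivAt (fun t : ℝ => u (x + t • EuclideanSpace.single i (1 : ℝ))) (d x) 0)
    {x : E n} (hx : x ∈ ball (0 : E n) 1) :
    ∀ᶠ t : ℝ in 𝓝 0, HasDerivAt (fun t : ℝ => u (x + t • EuclideanSpace.single i (1 : ℝ)))
      (d (x + t • EuclideanSpace.single i (1 : ℝ))) t := by
  have hc : Continuous fun t : ℝ => x + t • EuclideanSpace.single i (1 : ℝ) := by fun_prop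
  have : ∀ᶠ t : ℝ in 𝓝 0, x + t • EuclideanSpace.single i (1 : ℝ) ∈ ball (0 : E n) 1 :=
    hc.continuousAt.eventually (isOpen_ball.mem_nhds (by simpa using hx))
  filter_upwards [this] with t ht
  have h1 := h _ ht
  rw [← sub_self t] at h1
  refine (h1.comp_sub_const t t).congr_of_eventuallyEq (Eventually.of_forall fun s => ?_)
  simp only
  rw [add_assoc, ← add_smul]
  congr 3
  ring

/-- Weak maximum principle: perturb by `ε|x|²` to make the operator strictly positive. -/
theorem IsHH.max_principle {n : ℕ} (hn : 3 ≤ n) {u : E n → ℝ} (hu : IsHH n u) {R M : ℝ}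
    (hR : R < 1) (hM : ∀ x ∈ sphere (0 : E n) R, u x ≤ M) :
    ∀ x ∈ closedBall (0 : E n) R, u x ≤ M := by
  obtain ⟨hc, d1, d2, hd, he⟩ := hu
  intro x hx
  refine le_of_forall_pos_le_add fun ε hε => ?_
  have hRb : closedBall (0 : E n) R ⊆ ball 0 1 := closedBall_subset_ball hR
  obtain ⟨x0, hx0, hmax⟩ := (isCompact_closedBall (0 : E n) R).exists_isMaxOn ⟨x, hx⟩
    (f := fun x => u x + ε * ‖x‖ ^ 2) ((hc.mono hRb).add (by fun_prop))
  have hx0R : ‖x0‖ ≤ R := by simpa using hx0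
  have h0R : 0 ≤ R := (norm_nonneg _).trans hx0R
  have hw := hmax hx
  simp only [mem_ofPred_eq] at hw
  rcases hx0R.eq_or_lt with h | h
  · have := hM x0 (by simpa using h)
    rw [h] at hw
    have h1 : ε * R ^ 2 ≤ ε := mul_le_of_le_one_right hε.le (by nlinarith)
    have h2 : 0 ≤ ε * ‖x‖ ^ 2 := by positivity
    linarith
  -- at an interior maximum of `u + ε|x|²` the left side of the equation for `u` would be at most
  -- `-2nε(1-|x|²) - 4(n-2)ε|x|² < 0`
  · exfalso
    have hx0b := hRb hx0
    have hs : ‖x0‖ ^ 2 < 1 := by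
      have : ‖x0‖ < 1 := h.trans hR
      nlinarith [norm_nonneg x0]
    have key : ∀ i, d1 i x0 + ε * (2 * x0 i) = 0 ∧ d2 i x0 + 2 * ε ≤ 0 := by
      intro i
      have hcl : Continuous fun t : ℝ => x0 + t • EuclideanSpace.single i (1 : ℝ) := by fun_prop
      have hN : ∀ t : ℝ, HasDerivAt
          (fun t : ℝ => ε * ‖x0 + t • EuclideanSpace.single i (1 : ℝ)‖ ^ 2)
          (ε * (2 * x0 i + 2 * t)) t := by
        intro t
        simp only [norm_add_single_sq]
        have := ((((hasDerivAt_id t).const_mul 2).mul_const (x0 i)).const_add (‖x0‖ ^ 2)).add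
          ((hasDerivAt_id t).pow 2)
        refine (this.const_mul ε).congr_deriv ?_
        simp
      have hloc := second_deriv_test
        (g := fun t => u (x0 + t • EuclideanSpace.single i (1 : ℝ)) +
          ε * ‖x0 + t • EuclideanSpace.single i (1 : ℝ)‖ ^ 2)
        (g1 := fun t => d1 i (x0 + t • EuclideanSpace.single i (1 : ℝ)) + ε * (2 * x0 i + 2 * t))
        (c := d2 i x0 + 2 * ε) ?_ ?_ ?_
      · simpa using hloc
      · filter_upwards [IsHH.line (fun x hx => (hd x hx i).1) hx0b] with t ht
        exact ht.add (hN t)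
      · refine (hd x0 hx0b i).2.add ?_
        have := (((hasDerivAt_id (0 : ℝ)).const_mul 2).const_add (2 * x0 i)).const_mul ε
        refine this.congr_deriv ?_
        ring
      · have : ∀ᶠ t : ℝ in 𝓝 0, x0 + t • EuclideanSpace.single i (1 : ℝ) ∈ ball (0 : E n) R :=
          hcl.continuousAt.eventually (isOpen_ball.mem_nhds (by simpa using h))
        filter_upwards [this] with t ht
        simpa using hmax (ball_subset_closedBall ht)
    have hsum2 : ∑ i, d2 i x0 ≤ -(2 * n * ε) := by
      calc ∑ i, d2 i x0 ≤ ∑ i : Fin n, (-(2 * ε)) :=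
            Finset.sum_le_sum fun i _ => by linarith [(key i).2]
        _ = -(2 * n * ε) := by simp; ring
    have hsum1 : ∑ i, x0 i * d1 i x0 = -(2 * ε) * ‖x0‖ ^ 2 := by
      rw [EuclideanSpace.real_norm_sq_eq, Finset.mul_sum]
      refine Finset.sum_congr rfl fun i _ => ?_
      have : d1 i x0 = - (ε * (2 * x0 i)) := by linarith [(key i).1]
      rw [this]; ring
    have h3 := he x0 hx0b
    rw [hsum1] at h3
    have hn' : (3 : ℝ) ≤ n := by exact_mod_cast hn
    have h4 : (1 - ‖x0‖ ^ 2) * ∑ i, d2 i x0 < 0 := by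
      have : 0 < (n : ℝ) * ε := by positivity
      exact mul_neg_of_pos_of_neg (by linarith) (by linarith)
    have h5 : 0 ≤ ((n : ℝ) - 2) * (ε * ‖x0‖ ^ 2) :=
      mul_nonneg (by linarith) (by positivity)
    nlinarith

/-! ### Poisson integrals -/

theorem sph_aesm {n : ℕ} {g : E n → ℝ} (hg : ContinuousOn g (sphere 0 1)) :
    AEStronglyMeasurable g (sphMeasure n) :=
  (hg.aestronglyMeasurable isClosed_sphere.measurableSet).smul_measure _

theorem sph_integrable {n : ℕ} (hn : 1 ≤ n) {g : E n → ℝ} (hg : ContinuousOn g (sphere 0 1)) :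
    Integrable g (sphMeasure n) := by
  have := sphMeasure_prob n hn
  obtain ⟨C, hC⟩ := (isCompact_sphere (0 : E n) 1).exists_bound_of_continuousOn hg
  refine Integrable.of_bound (sph_aesm hg) C ?_
  filter_upwards [sphMeasure_ae n] with ξ hξ using hC ξ hξ

theorem slice_continuousOn {n : ℕ} {K : E n → E n → ℝ}
    (hK : ContinuousOn (Function.uncurry K) (ball 0 1 ×ˢ sphere 0 1)) {x : E n}
    (hx : x ∈ ball (0 : E n) 1) : ContinuousOn (K x) (sphere 0 1) :=
  hK.comp (f := fun ξ => (x, ξ)) (by fun_prop) fun _ hξ => ⟨hx, hξ⟩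

/-- The dominating constant for parametric integrals: a kernel continuous on ball × sphere is bounded
for `x` near any point of the ball, uniformly on the sphere. -/
theorem exists_local_bound {n : ℕ} {K : E n → E n → ℝ}
    (hK : ContinuousOn (Function.uncurry K) (ball 0 1 ×ˢ sphere 0 1)) {x : E n}
    (hx : x ∈ ball (0 : E n) 1) :
    ∃ r > 0, ∃ C, ball x r ⊆ ball 0 1 ∧ ∀ y ∈ ball x r, ∀ ξ ∈ sphere (0 : E n) 1, ‖K y ξ‖ ≤ C := by
  obtain ⟨r, hr, hsub⟩ := nhds_basis_closedBall.mem_iff.1 (isOpen_ball.mem_nhds hx)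
  obtain ⟨C, hC⟩ := ((isCompact_closedBall x r).prod (isCompact_sphere (0 : E n) 1)
    ).exists_bound_of_continuousOn (hK.mono (prod_mono hsub subset_rfl))
  exact ⟨r, hr, C, ball_subset_closedBall.trans hsub,
    fun y hy ξ hξ => hC (y, ξ) ⟨ball_subset_closedBall hy, hξ⟩⟩

theorem continuousOn_sph_integral {n : ℕ} (hn : 1 ≤ n) {K : E n → E n → ℝ}
    (hK : ContinuousOn (Function.uncurry K) (ball 0 1 ×ˢ sphere 0 1)) :
    ContinuousOn (fun x => ∫ ξ, K x ξ ∂(sphMeasure n)) (ball 0 1) := by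
  have := sphMeasure_prob n hn
  intro x hx
  obtain ⟨r, hr, C, hsub, hC⟩ := exists_local_bound hK hx
  refine ContinuousAt.continuousWithinAt ?_
  have hev : ∀ᶠ y in 𝓝 x, y ∈ ball x r := isOpen_ball.mem_nhds (mem_ball_self hr)
  refine continuousAt_of_dominated (bound := fun _ => C) ?_ ?_ (integrable_const _) ?_
  · filter_upwards [hev] with y hy using sph_aesm (slice_continuousOn hK (hsub hy))
  · filter_upwards [hev] with y hy
    filter_upwards [sphMeasure_ae n] with ξ hξ using hC y hy ξ hξ
  · filter_upwards [sphMeasure_ae n] with ξ hξ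
    have h1 : ContinuousOn (fun y => K y ξ) (ball 0 1) :=
      hK.comp (f := fun y => (y, ξ)) (by fun_prop) fun _ hy => ⟨hy, hξ⟩
    exact h1.continuousAt (isOpen_ball.mem_nhds hx)

/-- Differentiation under the integral over the sphere, along a coordinate line in the ball. -/
theorem hasDerivAt_sph_integral {n : ℕ} (hn : 1 ≤ n) {K K1 : E n → E n → ℝ} {i : Fin n}
    (hK : ContinuousOn (Function.uncurry K) (ball 0 1 ×ˢ sphere 0 1))
    (hK1 : ContinuousOn (Function.uncurry K1) (ball 0 1 ×ˢ sphere 0 1))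
    (hd : ∀ x ∈ ball (0 : E n) 1, ∀ ξ ∈ sphere (0 : E n) 1,
      HasDerivAt (fun t : ℝ => K (x + t • EuclideanSpace.single i (1 : ℝ)) ξ) (K1 x ξ) 0)
    {x : E n} (hx : x ∈ ball (0 : E n) 1) :
    HasDerivAt (fun t : ℝ => ∫ ξ, K (x + t • EuclideanSpace.single i (1 : ℝ)) ξ ∂(sphMeasure n))
      (∫ ξ, K1 x ξ ∂(sphMeasure n)) 0 := by
  have := sphMeasure_prob n hn
  obtain ⟨r, hr, C, hsub, hC⟩ := exists_local_bound hK1 hx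
  have hcl : Continuous fun t : ℝ => x + t • EuclideanSpace.single i (1 : ℝ) := by fun_prop
  set s : Set ℝ := (fun t : ℝ => x + t • EuclideanSpace.single i (1 : ℝ)) ⁻¹' ball x r with hs
  have hs0 : s ∈ 𝓝 (0 : ℝ) :=
    (isOpen_ball.preimage hcl).mem_nhds (by simpa [hs] using hr)
  have h := hasDerivAt_integral_of_dominated_loc_of_deriv_le (μ := sphMeasure n) (x₀ := (0 : ℝ))
    (F := fun t ξ => K (x + t • EuclideanSpace.single i (1 : ℝ)) ξ)
    (F' := fun t ξ => K1 (x + t • EuclideanSpace.single i (1 : ℝ)) ξ)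
    (bound := fun _ => C) hs0 ?_ ?_ ?_ ?_ (integrable_const _) ?_
  · simpa using h.2
  · filter_upwards [hs0] with t ht using sph_aesm (slice_continuousOn hK (hsub ht))
  · simpa using sph_integrable hn (slice_continuousOn hK hx)
  · simpa using sph_aesm (slice_continuousOn hK1 hx)
  · filter_upwards [sphMeasure_ae n] with ξ hξ t ht using hC _ ht ξ hξ
  · filter_upwards [sphMeasure_ae n] with ξ hξ t ht
    have h1 := hd _ (hsub ht) ξ hξ
    rw [← sub_self t] at h1
    refine (h1.comp_sub_const t t).congr_of_eventuallyEq (Eventually.of_forall fun s => ?_)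
    simp only
    rw [add_assoc, ← add_smul]
    congr 4
    ring

/-- `q(x,ξ) = (1-|x|²)/|x-ξ|²`, whose power `n-1` is the hyperbolic Poisson kernel. -/
def pq {n : ℕ} (x ξ : E n) : ℝ := (1 - ‖x‖ ^ 2) / ‖x - ξ‖ ^ 2

/-- The partial derivative `∂ᵢ q` in the variable `x`. -/
def pq1 {n : ℕ} (i : Fin n) (x ξ : E n) : ℝ :=
  (-2 * x i * ‖x - ξ‖ ^ 2 - 2 * (1 - ‖x‖ ^ 2) * (x i - ξ i)) / (‖x - ξ‖ ^ 2) ^ 2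

/-- The second partial derivative `∂ᵢ∂ᵢ q` in the variable `x`. -/
def pq2 {n : ℕ} (i : Fin n) (x ξ : E n) : ℝ :=
  ((-2 * ‖x - ξ‖ ^ 2 - 2 * (1 - ‖x‖ ^ 2)) * (‖x - ξ‖ ^ 2) ^ 2 -
    (-2 * x i * ‖x - ξ‖ ^ 2 - 2 * (1 - ‖x‖ ^ 2) * (x i - ξ i)) *
      (4 * ‖x - ξ‖ ^ 2 * (x i - ξ i))) / ((‖x - ξ‖ ^ 2) ^ 2) ^ 2

theorem ne_of_ball_sphere {n : ℕ} {x ξ : E n} (hx : x ∈ ball (0 : E n) 1)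
    (hξ : ξ ∈ sphere (0 : E n) 1) : ‖x - ξ‖ ^ 2 ≠ 0 := by
  intro h
  have : x = ξ := by simpa [sub_eq_zero] using h
  subst this
  simp at hx hξ
  linarith

section coordinateLines

variable {n : ℕ} (x ξ : E n) (i : Fin n)

theorem hasDerivAt_normSq :
    HasDerivAt (fun t : ℝ => ‖x + t • EuclideanSpace.single i (1 : ℝ)‖ ^ 2) (2 * x i) 0 := by
  simp only [norm_add_single_sq]
  have := ((((hasDerivAt_id (0 : ℝ)).const_mul 2).mul_const (x i)).const_add (‖x‖ ^ 2)).add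
    ((hasDerivAt_id (0 : ℝ)).pow 2)
  refine this.congr_deriv ?_
  simp

theorem hasDerivAt_normSq_sub :
    HasDerivAt (fun t : ℝ => ‖x + t • EuclideanSpace.single i (1 : ℝ) - ξ‖ ^ 2)
      (2 * (x i - ξ i)) 0 := by
  have := hasDerivAt_normSq (x - ξ) i
  simpa only [sub_add_eq_add_sub, PiLp.sub_apply] using this

theorem hasDerivAt_coord :
    HasDerivAt (fun t : ℝ => (x + t • EuclideanSpace.single i (1 : ℝ)) i) 1 0 := by
  simpa using (hasDerivAt_id (0 : ℝ)).const_add (x i)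

variable {x ξ}

theorem hasDerivAt_pq (hx : x ∈ ball (0 : E n) 1) (hξ : ξ ∈ sphere (0 : E n) 1) :
    HasDerivAt (fun t : ℝ => pq (x + t • EuclideanSpace.single i (1 : ℝ)) ξ) (pq1 i x ξ) 0 := by
  have hB := ne_of_ball_sphere hx hξ
  have := ((hasDerivAt_normSq x i).const_sub 1).div (hasDerivAt_normSq_sub x ξ i)
    (by simpa using hB)
  refine this.congr_deriv ?_
  simp only [zero_smul, add_zero, pq1]
  ring

theorem hasDerivAt_pq1 (hx : x ∈ ball (0 : E n) 1) (hξ : ξ ∈ sphere (0 : E n) 1) :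
    HasDerivAt (fun t : ℝ => pq1 i (x + t • EuclideanSpace.single i (1 : ℝ)) ξ) (pq2 i x ξ) 0 := by
  have hB := ne_of_ball_sphere hx hξ
  have hA := (hasDerivAt_normSq x i).const_sub 1
  have hB' := hasDerivAt_normSq_sub x ξ i
  have hX := hasDerivAt_coord x i
  have := (((hX.const_mul (-2)).mul hB').sub ((hA.const_mul 2).mul (hX.sub_const (ξ i)))).div
    (hB'.pow 2) (by simpa using hB)
  refine this.congr_deriv ?_
  simp only [zero_smul, add_zero, pq2, Pi.mul_apply, Pi.sub_apply, Pi.pow_apply]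
  push_cast
  ring

end coordinateLines

theorem continuousOn_pq {n : ℕ} :
    ContinuousOn (Function.uncurry (pq (n := n))) (ball 0 1 ×ˢ sphere 0 1) := by
  refine ContinuousOn.div (by fun_prop) (by fun_prop) ?_
  rintro ⟨x, ξ⟩ ⟨hx, hξ⟩
  exact ne_of_ball_sphere hx hξ

theorem continuousOn_pq1 {n : ℕ} (i : Fin n) :
    ContinuousOn (Function.uncurry (pq1 i)) (ball 0 1 ×ˢ sphere 0 1) := by
  refine ContinuousOn.div (by fun_prop) (by fun_prop) ?_
  rintro ⟨x, ξ⟩ ⟨hx, hξ⟩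
  exact pow_ne_zero 2 (ne_of_ball_sphere hx hξ)

theorem continuousOn_pq2 {n : ℕ} (i : Fin n) :
    ContinuousOn (Function.uncurry (pq2 i)) (ball 0 1 ×ˢ sphere 0 1) := by
  refine ContinuousOn.div (by fun_prop) (by fun_prop) ?_
  rintro ⟨x, ξ⟩ ⟨hx, hξ⟩
  exact pow_ne_zero 2 (pow_ne_zero 2 (ne_of_ball_sphere hx hξ))

/-- `|∇q|² = 4/|x-ξ|⁴`, together with the values of `Δq` and `⟨x,∇q⟩`, for `|ξ| = 1`, in terms of
`A = 1-|x|²` and `B = |x-ξ|²`. -/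
theorem pq_sums {n : ℕ} {x ξ : E n} (hx : x ∈ ball (0 : E n) 1) (hξ : ξ ∈ sphere (0 : E n) 1)
    {A B : ℝ} (hA : A = 1 - ‖x‖ ^ 2) (hB : B = ‖x - ξ‖ ^ 2) :
    ∑ i, pq1 i x ξ ^ 2 = 4 / B ^ 2 ∧
    ∑ i, pq2 i x ξ = (4 - 2 * n) * (A + B) / B ^ 2 ∧
    ∑ i, x i * pq1 i x ξ = (-2 * B + A * B + A ^ 2) / B ^ 2 := by
  have hB0 : B ≠ 0 := hB ▸ ne_of_ball_sphere hx hξ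
  have hxx : ∑ i, x i ^ 2 = 1 - A := by rw [hA, EuclideanSpace.real_norm_sq_eq]; ring
  have hξξ : ∑ i, ξ i ^ 2 = 1 := by
    rw [← EuclideanSpace.real_norm_sq_eq, mem_sphere_zero_iff_norm.1 hξ, one_pow]
  have hxξ : ∑ i, x i * ξ i = (2 - A - B) / 2 := by
    have h : B = ∑ i, (x i ^ 2 - 2 * (x i * ξ i) + ξ i ^ 2) := by
      rw [hB, EuclideanSpace.real_norm_sq_eq]
      refine Finset.sum_congr rfl fun i _ => ?_
      rw [PiLp.sub_apply]; ring
    rw [Finset.sum_add_distrib, Finset.sum_sub_distrib, ← Finset.mul_sum, hxx, hξξ] at h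
    linarith
  -- every sum is a combination of the three sums above
  have comb : ∀ a b c d : ℝ, ∑ i, (a * x i ^ 2 + b * (x i * ξ i) + c * ξ i ^ 2 + d) =
      a * (1 - A) + b * ((2 - A - B) / 2) + c + n * d := by
    intro a b c d
    simp only [Finset.sum_add_distrib, ← Finset.mul_sum, hxx, hξξ, hxξ]
    simp
  refine ⟨?_, ?_, ?_⟩
  · have := comb (4 * (A + B) ^ 2 / B ^ 4) (-8 * A * (A + B) / B ^ 4) (4 * A ^ 2 / B ^ 4) 0
    refine (Finset.sum_congr rfl fun i _ => ?_).trans (this.trans ?_)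
    · rw [pq1, ← hA, ← hB]; field_simp; ring
    · field_simp; ring
  · have := comb (8 * (A + B) / B ^ 3) (-(8 * (A + B) + 8 * A) / B ^ 3) (8 * A / B ^ 3)
      (-2 * (A + B) / B ^ 2)
    refine (Finset.sum_congr rfl fun i _ => ?_).trans (this.trans ?_)
    · rw [pq2, ← hA, ← hB]; field_simp; ring
    · field_simp; ring
  · have := comb (-2 * (A + B) / B ^ 2) (2 * A / B ^ 2) 0 0
    refine (Finset.sum_congr rfl fun i _ => ?_).trans (this.trans ?_)
    · rw [pq1, ← hA, ← hB]; field_simp; ring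
    · field_simp; ring

/-- Hyperbolic Poisson integrals of continuous boundary data satisfy the equation inside the ball:
differentiate under the integral and use `pq_sums`. -/
theorem isHH_integral {n : ℕ} (hn : 3 ≤ n) {P : E n → ℝ} (hP : Continuous P) :
    IsHH n (fun x => ∫ ξ, Ph n x ξ * P ξ ∂(sphMeasure n)) := by
  obtain ⟨k, rfl⟩ := Nat.exists_eq_add_of_le' hn
  have hn1 : 1 ≤ k + 3 := by omega
  have hPc : ContinuousOn (fun z : E (k + 3) × E (k + 3) => P z.2) (ball 0 1 ×ˢ sphere 0 1) := by
    fun_prop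
  let K0 : E (k + 3) → E (k + 3) → ℝ := fun x ξ => pq x ξ ^ (k + 2) * P ξ
  let K1 : Fin (k + 3) → E (k + 3) → E (k + 3) → ℝ := fun i x ξ =>
    (k + 2) * pq x ξ ^ (k + 1) * pq1 i x ξ * P ξ
  let K2 : Fin (k + 3) → E (k + 3) → E (k + 3) → ℝ := fun i x ξ =>
    (k + 2) * ((k + 1) * pq x ξ ^ k * pq1 i x ξ ^ 2 + pq x ξ ^ (k + 1) * pq2 i x ξ) * P ξ
  have c0 : ContinuousOn (Function.uncurry K0) (ball 0 1 ×ˢ sphere 0 1) :=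
    (continuousOn_pq.pow _).mul hPc
  have c1 : ∀ i, ContinuousOn (Function.uncurry (K1 i)) (ball 0 1 ×ˢ sphere 0 1) := fun i =>
    ((continuousOn_const.mul (continuousOn_pq.pow _)).mul (continuousOn_pq1 i)).mul hPc
  have c2 : ∀ i, ContinuousOn (Function.uncurry (K2 i)) (ball 0 1 ×ˢ sphere 0 1) := fun i =>
    (continuousOn_const.mul (((continuousOn_const.mul (continuousOn_pq.pow _)).mul
      ((continuousOn_pq1 i).pow 2)).add ((continuousOn_pq.pow _).mul (continuousOn_pq2 i)))).mul hPc
  have hPh : ∀ x ξ, Ph (k + 3) x ξ * P ξ = K0 x ξ := fun x ξ => rfl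
  simp only [hPh]
  refine ⟨continuousOn_sph_integral hn1 c0, fun i x => ∫ ξ, K1 i x ξ ∂(sphMeasure (k + 3)),
    fun i x => ∫ ξ, K2 i x ξ ∂(sphMeasure (k + 3)), fun x hx i => ⟨?_, ?_⟩, fun x hx => ?_⟩
  · refine hasDerivAt_sph_integral hn1 c0 (c1 i) (fun x hx ξ hξ => ?_) hx
    refine (((hasDerivAt_pq i hx hξ).pow (k + 2)).mul_const (P ξ)).congr_deriv ?_
    simp [K1]
  · refine hasDerivAt_sph_integral hn1 (c1 i) (c2 i) (fun x hx ξ hξ => ?_) hx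
    have := ((((hasDerivAt_pq i hx hξ).pow (k + 1)).const_mul ((k : ℝ) + 2)).mul
      (hasDerivAt_pq1 i hx hξ)).mul_const (P ξ)
    refine this.congr_deriv ?_
    simp only [zero_smul, add_zero, Pi.pow_apply, Nat.add_sub_cancel, K2]
    push_cast
    ring
  · have i1 : ∀ i, Integrable (K1 i x) (sphMeasure (k + 3)) := fun i =>
      sph_integrable hn1 (slice_continuousOn (c1 i) hx)
    have i2 : ∀ i, Integrable (K2 i x) (sphMeasure (k + 3)) := fun i =>
      sph_integrable hn1 (slice_continuousOn (c2 i) hx)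
    simp only [← integral_const_mul]
    rw [← integral_finsetSum _ fun i _ => i2 i,
      ← integral_finsetSum _ fun i _ => (i1 i).const_mul _, ← integral_const_mul,
      ← integral_const_mul, ← integral_add ((integrable_finsetSum _ fun i _ => i2 i).const_mul _)
        ((integrable_finsetSum _ fun i _ => (i1 i).const_mul _).const_mul _)]
    refine integral_eq_zero_of_ae ?_
    filter_upwards [sphMeasure_ae (k + 3)] with ξ hξ
    obtain ⟨s1, s2, s3⟩ := pq_sums hx hξ rfl rfl
    have hB := ne_of_ball_sphere hx hξ
    have e2 : ∑ i, K2 i x ξ = (k + 2) * ((k + 1) * pq x ξ ^ k * ∑ i, pq1 i x ξ ^ 2 +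
        pq x ξ ^ (k + 1) * ∑ i, pq2 i x ξ) * P ξ := by
      simp only [K2, ← Finset.sum_mul, ← Finset.mul_sum, Finset.sum_add_distrib]
    have e1 : ∑ i, x i * K1 i x ξ =
        (k + 2) * pq x ξ ^ (k + 1) * (∑ i, x i * pq1 i x ξ) * P ξ := by
      simp only [K1, Finset.sum_mul, Finset.mul_sum]
      exact Finset.sum_congr rfl fun i _ => by ring
    simp only [Pi.zero_apply]
    rw [e2, e1, s1, s2, s3, pow_succ (pq x ξ) k]
    generalize pq x ξ ^ k = z
    rw [pq]
    push_cast
    field_simp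
    ring

/-! ### The hypergeometric factor -/

/-- The sequence `a` grows at most polynomially. -/
def PolyBdd (a : ℕ → ℝ) : Prop := ∃ C p, 0 ≤ C ∧ ∀ k : ℕ, |a k| ≤ C * ((k : ℝ) + 1) ^ (p : ℕ)

/-- The coefficient sequence of the derivative of `∑ aₖ xᵏ`. -/
def dcoeff (a : ℕ → ℝ) : ℕ → ℝ := fun k => ((k : ℝ) + 1) * a (k + 1)

theorem PolyBdd.dcoeff {a : ℕ → ℝ} (ha : PolyBdd a) : PolyBdd (dcoeff a) := by
  obtain ⟨C, p, hC, h⟩ := ha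
  refine ⟨C * 2 ^ p, p + 1, by positivity, fun k => ?_⟩
  have h1 := h (k + 1)
  have hk : (0 : ℝ) ≤ k := Nat.cast_nonneg k
  rw [_root_.dcoeff, abs_mul, abs_of_nonneg (by positivity : (0 : ℝ) ≤ (k : ℝ) + 1)]
  calc ((k : ℝ) + 1) * |a (k + 1)| ≤ ((k : ℝ) + 1) * (C * (2 * ((k : ℝ) + 1)) ^ p) := by
        refine mul_le_mul_of_nonneg_left (h1.trans ?_) (by positivity)
        push_cast
        gcongr
        linarith
    _ = C * 2 ^ p * ((k : ℝ) + 1) ^ (p + 1) := by rw [mul_pow]; ring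

theorem PolyBdd.summable_bound {a : ℕ → ℝ} (ha : PolyBdd a) {r : ℝ} (hr0 : 0 < r) (hr : r < 1) :
    Summable fun k => |a k| * r ^ k := by
  obtain ⟨C, p, hC, h⟩ := ha
  have h1 := summable_pow_mul_geometric_of_norm_lt_one p (r := r)
    (by rwa [Real.norm_eq_abs, abs_of_pos hr0])
  have h2 := ((summable_nat_add_iff 1).2 h1).mul_left (C * r⁻¹)
  refine Summable.of_nonneg_of_le (fun k => by positivity) (fun k => ?_) h2
  calc |a k| * r ^ k ≤ C * ((k : ℝ) + 1) ^ p * r ^ k := by gcongr; exact h k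
    _ = _ := by push_cast; field_simp; ring

theorem exists_between_abs {x : ℝ} (hx : |x| < 1) : ∃ r, |x| < r ∧ 0 < r ∧ r < 1 := by
  obtain ⟨r, h1, h2⟩ := exists_between hx
  exact ⟨r, h1, (abs_nonneg x).trans_lt h1, h2⟩

theorem PolyBdd.summable {a : ℕ → ℝ} (ha : PolyBdd a) {x : ℝ} (hx : |x| < 1) :
    Summable fun k => a k * x ^ k := by
  obtain ⟨r, h1, h0, h2⟩ := exists_between_abs hx
  refine Summable.of_norm_bounded (ha.summable_bound h0 h2) fun k => ?_
  rw [Real.norm_eq_abs, abs_mul, abs_pow]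
  gcongr

/-- Termwise differentiation of a power series with polynomially bounded coefficients. -/
theorem PolyBdd.hasDerivAt {a : ℕ → ℝ} (ha : PolyBdd a) {x : ℝ} (hx : |x| < 1) :
    HasDerivAt (fun y => ∑' k, a k * y ^ k) (∑' k, _root_.dcoeff a k * x ^ k) x := by
  obtain ⟨r, h1, h0, h2⟩ := exists_between_abs hx
  have hu : Summable fun k : ℕ => |a k * k| * r ^ (k - 1) := by
    rw [← summable_nat_add_iff 1]
    refine (ha.dcoeff.summable_bound h0 h2).congr fun k => ?_
    simp [_root_.dcoeff, mul_comm]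
  have hxr : x ∈ ball (0 : ℝ) r := by simpa using h1
  have h := hasDerivAt_tsum_of_isPreconnected (𝕜 := ℝ) (g := fun k y => a k * y ^ k)
    (g' := fun k y => a k * (k * y ^ (k - 1))) hu isOpen_ball
    (convex_ball (0 : ℝ) r).isPreconnected
    (fun k y _ => (hasDerivAt_pow k y).const_mul (a k)) (fun k y hy => ?_) hxr (ha.summable hx) hxr
  · refine h.congr_deriv ?_
    have hs : Summable fun k : ℕ => a k * (k * x ^ (k - 1)) := by
      rw [← summable_nat_add_iff 1]
      refine (ha.dcoeff.summable hx).congr fun k => ?_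
      simp [_root_.dcoeff]; ring
    rw [hs.tsum_eq_zero_add]
    simp only [Nat.cast_zero, zero_mul, mul_zero, zero_add, Nat.add_sub_cancel]
    refine tsum_congr fun k => ?_
    simp [_root_.dcoeff]; ring
  · have hy' : |y| ≤ r := by simpa using (mem_ball_zero_iff.1 hy).le
    rw [← mul_assoc, Real.norm_eq_abs, abs_mul, abs_pow]
    gcongr

/-- Multiplying the derivative of `∑ dₖ xᵏ` by `x` gives the series with coefficients `k dₖ`. -/
theorem hasSum_shift {d : ℕ → ℝ} {x s : ℝ} (h : HasSum (fun k => dcoeff d k * x ^ k) s) :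
    HasSum (fun k : ℕ => (k : ℝ) * d k * x ^ k) (x * s) := by
  rw [← hasSum_nat_add_iff' 1]
  simp only [Finset.range_one, Finset.sum_singleton, Nat.cast_zero, zero_mul, sub_zero]
  refine (h.mul_left x).congr_fun fun k => ?_
  simp only [dcoeff]; push_cast; ring

/-- The Taylor coefficients of `F_l`. -/
def hgc (n l k : ℕ) : ℝ :=
  ((ascPochhammer ℝ k).eval (l : ℝ) * (ascPochhammer ℝ k).eval (1 - (n : ℝ) / 2)) /
      ((ascPochhammer ℝ k).eval ((l : ℝ) + (n : ℝ) / 2) * (Nat.factorial k))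

/-- The two-term recurrence of the hypergeometric coefficients, cleared of denominators; it is the
coefficientwise form of the hypergeometric equation. -/
theorem hgc_succ {n : ℕ} (hn : 3 ≤ n) (l k : ℕ) :
    ((l : ℝ) + n / 2 + k) * (k + 1) * hgc n l (k + 1) = (l + k) * (1 - n / 2 + k) * hgc n l k := by
  have hn' : (3 : ℝ) ≤ n := by exact_mod_cast hn
  have h1 : (0 : ℝ) < (ascPochhammer ℝ k).eval ((l : ℝ) + (n : ℝ) / 2) :=
    ascPochhammer_pos k _ (by positivity)
  have h2 : (0 : ℝ) < Nat.factorial k := by positivity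
  simp only [hgc, ascPochhammer_succ_eval, Nat.factorial_succ]
  push_cast
  have h3 : (l : ℝ) + n / 2 + k ≠ 0 := by positivity
  have h4 : (k : ℝ) + 1 ≠ 0 := by positivity
  field_simp

/-- The coefficients are absolutely summable: `k|cₖ| - (k+1)|cₖ₊₁| ≥ |cₖ|/2` for `k ≥ n`, so the
partial sums are dominated by a telescoping sum. -/
theorem hgc_summable {n : ℕ} (hn : 3 ≤ n) (l : ℕ) : Summable fun k => |hgc n l k| := by
  have hn' : (3 : ℝ) ≤ n := by exact_mod_cast hn
  rw [← summable_nat_add_iff n]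
  set d : ℕ → ℝ := fun k => |hgc n l (k + n)| with hd
  have hstep : ∀ k, d k ≤ 2 * (((k + n : ℕ) : ℝ) * d k - ((k + n : ℕ) + 1 : ℝ) * d (k + 1)) := by
    intro k
    have h := hgc_succ hn l (k + n)
    set N : ℝ := ((k + n : ℕ) : ℝ) with hN
    have hNn : (n : ℝ) ≤ N := by rw [hN]; push_cast; linarith [Nat.cast_nonneg (α := ℝ) k]
    have hl : (0 : ℝ) ≤ l := Nat.cast_nonneg l
    have h' := congrArg abs h
    rw [abs_mul (((l : ℝ) + n / 2 + N) * (N + 1)), abs_mul (((l : ℝ) + N) * (1 - n / 2 + N)),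
      abs_of_pos (mul_pos (by linarith) (by linarith) : 0 < ((l : ℝ) + n / 2 + N) * (N + 1)),
      abs_of_nonneg (mul_nonneg (by linarith) (by linarith) :
        0 ≤ ((l : ℝ) + N) * (1 - n / 2 + N))] at h'
    have e1 : |hgc n l (k + n + 1)| = d (k + 1) := by
      simp only [hd]; congr 2; ring
    have e0 : |hgc n l (k + n)| = d k := rfl
    rw [e1, e0] at h'
    have hdk : 0 ≤ d k := abs_nonneg _
    have hdk1 : 0 ≤ d (k + 1) := abs_nonneg _
    have h5 : (N + 1) * d (k + 1) ≤ (1 - n / 2 + N) * d k := by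
      have hp : 0 < (l : ℝ) + N := by linarith
      refine le_of_mul_le_mul_left ?_ hp
      have : 0 ≤ (n : ℝ) / 2 * ((N + 1) * d (k + 1)) :=
        mul_nonneg (by linarith) (mul_nonneg (by linarith) hdk1)
      nlinarith
    nlinarith
  refine summable_of_sum_range_le (c := 2 * (n * d 0)) (fun k => abs_nonneg _) fun m => ?_
  have htel : ∀ m : ℕ, ∑ k ∈ Finset.range m, d k ≤ 2 * (n * d 0 - ((m + n : ℕ) : ℝ) * d m) := by
    intro m
    induction m with
    | zero => simp
    | succ m ih =>
      rw [Finset.sum_range_succ]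
      have := hstep m
      push_cast at this ih ⊢
      linarith
  refine (htel m).trans ?_
  have : 0 ≤ ((m + n : ℕ) : ℝ) * d m := mul_nonneg (Nat.cast_nonneg _) (abs_nonneg _)
  linarith

theorem hgc_polyBdd {n : ℕ} (hn : 3 ≤ n) (l : ℕ) : PolyBdd (hgc n l) := by
  have hs := hgc_summable hn l
  refine ⟨∑' k, |hgc n l k|, 0, tsum_nonneg fun _ => abs_nonneg _, fun k => ?_⟩
  rw [pow_zero, mul_one]
  exact hs.le_tsum k fun _ _ => abs_nonneg _

theorem Fl_zero (n l : ℕ) : Fl n l 0 = 1 := by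
  rw [Fl, tsum_eq_single 0]
  · simp
  · intro k hk; simp [hk]

/-- Continuity up to the endpoint `1`, where the series still converges absolutely. -/
theorem continuousOn_Fl {n : ℕ} (hn : 3 ≤ n) (l : ℕ) : ContinuousOn (Fl n l) (Icc 0 1) := by
  refine continuousOn_tsum (fun k => by fun_prop) (hgc_summable hn l) fun k x hx => ?_
  rw [norm_mul, norm_pow]
  refine mul_le_of_le_one_right (norm_nonneg _) (pow_le_one₀ (norm_nonneg _) ?_)
  rw [Real.norm_eq_abs, abs_of_nonneg hx.1]
  exact hx.2

/-- The hypergeometric differential equation for `F_l` on the interval `(-1,1)`, with `F1` and `F2`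
the first two derivatives. -/
theorem Fl_ode {n : ℕ} (hn : 3 ≤ n) (l : ℕ) : ∃ F1 F2 : ℝ → ℝ, ∀ x : ℝ, |x| < 1 →
    HasDerivAt (Fl n l) (F1 x) x ∧ HasDerivAt F1 (F2 x) x ∧
    x * (1 - x) * F2 x + ((l + (n : ℝ) / 2) - (l + (1 - (n : ℝ) / 2) + 1) * x) * F1 x -
      l * (1 - (n : ℝ) / 2) * Fl n l x = 0 := by
  have h0 := hgc_polyBdd hn l
  have h1 := h0.dcoeff
  have h2 := h1.dcoeff
  refine ⟨fun x => ∑' k, dcoeff (hgc n l) k * x ^ k,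
    fun x => ∑' k, dcoeff (dcoeff (hgc n l)) k * x ^ k, fun x hx =>
    ⟨h0.hasDerivAt hx, h1.hasDerivAt hx, ?_⟩⟩
  have s0 : HasSum (fun k => hgc n l k * x ^ k) (Fl n l x) := (h0.summable hx).hasSum
  have s1 := (h1.summable hx).hasSum
  have s2 := (h2.summable hx).hasSum
  have t1 := hasSum_shift s1
  have t2 := hasSum_shift s2
  have t3 : HasSum (fun k : ℕ => (k : ℝ) * (((k : ℝ) - 1) * hgc n l k) * x ^ k)
      (x * (x * ∑' k, dcoeff (dcoeff (hgc n l)) k * x ^ k)) := by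
    refine hasSum_shift (d := fun k : ℕ => ((k : ℝ) - 1) * hgc n l k) (t2.congr_fun fun k => ?_)
    simp only [dcoeff]; push_cast; ring
  have hall := (((t2.sub t3).add (s1.mul_left (l + (n : ℝ) / 2))).sub
    (t1.mul_left (l + (1 - (n : ℝ) / 2) + 1))).sub (s0.mul_left (l * (1 - (n : ℝ) / 2)))
  have hz := hall.congr_fun (g := fun _ => 0) fun k => ?_
  · have := hz.unique hasSum_zero
    linear_combination this
  · have := hgc_succ hn l k
    simp only [dcoeff]
    linear_combination (-x ^ k) * this

/-! ### The solid solution -/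

theorem contDiff_of_poly {n : ℕ} {P : E n → ℝ}
    (hpoly : ∃ q : MvPolynomial (Fin n) ℝ, ∀ x : E n, P x = MvPolynomial.eval (fun i => x i) q) :
    ContDiff ℝ 2 P := by
  obtain ⟨q, hq⟩ := hpoly
  rw [funext hq]
  clear hq
  induction q using MvPolynomial.induction_on with
  | C a => simpa using contDiff_const
  | add p q hp hq => simpa using hp.add hq
  | mul_X p i hp => simpa using hp.mul (by fun_prop)

/-- Euler's identity `⟨x,∇P⟩ = l P` for homogeneous functions. -/
theorem euler_identity {n l : ℕ} {P : E n → ℝ} (hP : Differentiable ℝ P)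
    (hhom : ∀ (c : ℝ) (x : E n), P (c • x) = c ^ l * P x) (x : E n) :
    ∑ i, x i * fderiv ℝ P x (EuclideanSpace.single i 1) = l * P x := by
  have h1 : ∑ i, x i • EuclideanSpace.single i (1 : ℝ) = x := by
    simpa using (EuclideanSpace.basisFun (Fin n) ℝ).sum_repr x
  have h2 : ∑ i, x i * fderiv ℝ P x (EuclideanSpace.single i 1) = fderiv ℝ P x x := by
    have h : fderiv ℝ P x x = fderiv ℝ P x (∑ i, x i • EuclideanSpace.single i (1 : ℝ)) := by
      rw [h1]
    rw [h, map_sum]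
    simp only [map_smul, smul_eq_mul]
  have h3 : HasDerivAt (fun t : ℝ => P (x + t • x)) (fderiv ℝ P x x) 0 :=
    (hP x).hasFDerivAt.hasLineDerivAt x
  have h4 : (fun t : ℝ => P (x + t • x)) = fun t : ℝ => (1 + t) ^ l * P x := by
    funext t
    rw [← hhom, add_smul, one_smul]
  rw [h4] at h3
  have h5 := (((hasDerivAt_id (0 : ℝ)).const_add 1).pow l).mul_const (P x)
  rw [h2, h3.unique h5]
  simp

/-- The hypergeometric equation in the variable `|x|²` makes `F_l(|x|²) P(x)` a solution. -/
theorem isHH_solid {n : ℕ} (hn : 3 ≤ n) (l : ℕ) {P : E n → ℝ} (hP : ContDiff ℝ 2 P)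
    (hharm : ∀ x : E n, lap n P x = 0)
    (hhom : ∀ (c : ℝ) (x : E n), P (c • x) = c ^ l * P x) :
    IsHH n (fun x => Fl n l (‖x‖ ^ 2) * P x) := by
  obtain ⟨F1, F2, hF⟩ := Fl_ode hn l
  have hPd : Differentiable ℝ P := hP.differentiable (by norm_num)
  have hPd' : ∀ i, Differentiable ℝ (fun y => fderiv ℝ P y (EuclideanSpace.single i 1)) := by
    intro i
    exact ((hP.fderiv_right (m := 1) (by norm_num)).differentiable (by norm_num)).clm_apply
      (differentiable_const _)
  have hs : ∀ x ∈ ball (0 : E n) 1, |‖x‖ ^ 2| < 1 := by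
    intro x hx
    rw [abs_of_nonneg (by positivity)]
    have : ‖x‖ < 1 := by simpa using hx
    nlinarith [norm_nonneg x]
  let p1 : Fin n → E n → ℝ := fun i x => fderiv ℝ P x (EuclideanSpace.single i 1)
  let p2 : Fin n → E n → ℝ := fun i x =>
    fderiv ℝ (fun y => fderiv ℝ P y (EuclideanSpace.single i 1)) x (EuclideanSpace.single i 1)
  have hp1 : ∀ i x, HasDerivAt (fun t : ℝ => P (x + t • EuclideanSpace.single i (1 : ℝ)))
      (p1 i x) 0 := fun i x => (hPd x).hasFDerivAt.hasLineDerivAt _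
  have hp2 : ∀ i x, HasDerivAt (fun t : ℝ => p1 i (x + t • EuclideanSpace.single i (1 : ℝ)))
      (p2 i x) 0 := fun i x => (hPd' i x).hasFDerivAt.hasLineDerivAt _
  have comp : ∀ (G : ℝ → ℝ) (G' : ℝ) (x : E n) (i : Fin n), HasDerivAt G G' (‖x‖ ^ 2) →
      HasDerivAt (fun t : ℝ => G (‖x + t • EuclideanSpace.single i (1 : ℝ)‖ ^ 2))
        (G' * (2 * x i)) 0 := by
    intro G G' x i hG
    refine HasDerivAt.comp (0 : ℝ) (h₂ := G) ?_ (hasDerivAt_normSq x i)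
    simpa using hG
  refine ⟨?_, fun i x => F1 (‖x‖ ^ 2) * (2 * x i) * P x + Fl n l (‖x‖ ^ 2) * p1 i x,
    fun i x => (F2 (‖x‖ ^ 2) * (2 * x i) * (2 * x i) + F1 (‖x‖ ^ 2) * 2) * P x +
      2 * (F1 (‖x‖ ^ 2) * (2 * x i) * p1 i x) + Fl n l (‖x‖ ^ 2) * p2 i x,
    fun x hx i => ⟨?_, ?_⟩, fun x hx => ?_⟩
  · refine ContinuousOn.mul ?_ hPd.continuous.continuousOn
    intro x hx
    have := (hF _ (hs x hx)).1.continuousAt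
    exact (ContinuousAt.comp (f := fun x : E n => ‖x‖ ^ 2) this (by fun_prop)).continuousWithinAt
  · refine ((comp _ _ x i (hF _ (hs x hx)).1).mul (hp1 i x)).congr_deriv ?_
    simp
  · refine ((((comp _ _ x i (hF _ (hs x hx)).2.1).mul
      ((hasDerivAt_coord x i).const_mul 2)).mul (hp1 i x)).add
        ((comp _ _ x i (hF _ (hs x hx)).1).mul (hp2 i x))).congr_deriv ?_
    simp
    ring
  · have hE : ∑ i, x i * p1 i x = l * P x := euler_identity hPd hhom x
    have hL : ∑ i, p2 i x = 0 := hharm x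
    have hN : ∑ i, x i ^ 2 = ‖x‖ ^ 2 := (EuclideanSpace.real_norm_sq_eq x).symm
    have ode := (hF _ (hs x hx)).2.2
    set s := ‖x‖ ^ 2
    have e2 : ∑ i, ((F2 s * (2 * x i) * (2 * x i) + F1 s * 2) * P x +
        2 * (F1 s * (2 * x i) * p1 i x) + Fl n l s * p2 i x) =
        4 * F2 s * P x * ∑ i, x i ^ 2 + n * (2 * F1 s * P x) +
          4 * F1 s * ∑ i, x i * p1 i x + Fl n l s * ∑ i, p2 i x := by
      have : (n : ℝ) * (2 * F1 s * P x) = ∑ _i : Fin n, 2 * F1 s * P x := by simp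
      rw [this]
      simp only [Finset.mul_sum, ← Finset.sum_add_distrib]
      exact Finset.sum_congr rfl fun i _ => by ring
    have e1 : ∑ i, x i * (F1 s * (2 * x i) * P x + Fl n l s * p1 i x) =
        2 * F1 s * P x * ∑ i, x i ^ 2 + Fl n l s * ∑ i, x i * p1 i x := by
      simp only [Finset.mul_sum, ← Finset.sum_add_distrib]
      exact Finset.sum_congr rfl fun i _ => by ring
    rw [e2, e1, hE, hL, hN]
    linear_combination 4 * P x * ode

/-! ### Mass, boundary values and uniqueness -/

theorem Ph_nonneg {n : ℕ} {x ξ : E n} (hx : x ∈ ball (0 : E n) 1) : 0 ≤ Ph n x ξ := by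
  have : ‖x‖ < 1 := by simpa using hx
  have h : 0 ≤ 1 - ‖x‖ ^ 2 := by nlinarith [norm_nonneg x]
  unfold Ph
  positivity

theorem Ph_continuousOn {n : ℕ} {x : E n} (hx : x ∈ ball (0 : E n) 1) :
    ContinuousOn (Ph n x) (sphere 0 1) :=
  (ContinuousOn.div (by fun_prop) (by fun_prop) fun _ hξ => ne_of_ball_sphere hx hξ).pow _

/-- The Poisson kernel has total mass one: the mass is a rotation-invariant solution, so by the
maximum principle applied to it and to its negative its value at `x` agrees with the one at the
origin, which is `1`. -/
theorem Ph_mass {n : ℕ} (hn : 3 ≤ n) {x : E n} (hx : x ∈ ball (0 : E n) 1) :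
    ∫ ξ, Ph n x ξ ∂(sphMeasure n) = 1 := by
  have hn1 : 1 ≤ n := by omega
  have := sphMeasure_prob n hn1
  set U : E n → ℝ := fun x => ∫ ξ, Ph n x ξ ∂(sphMeasure n) with hU
  have hUH : IsHH n U := by
    simpa using isHH_integral hn (P := fun _ => 1) continuous_const
  have hrot : ∀ y z : E n, ‖y‖ = ‖z‖ → U y = U z := by
    intro y z hyz
    -- the reflection exchanging `y` and `z` preserves both `σ` and the kernel
    let T : E n ≃ₗᵢ[ℝ] E n := (ℝ ∙ (y - z))ᗮ.reflection
    have hT : T y = z := Submodule.reflection_sub hyz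
    have h := (sphMeasure_map n T).integral_comp
      T.toHomeomorph.measurableEmbedding (Ph n z)
    simp only [hU]
    rw [← h]
    refine integral_congr_ae (Eventually.of_forall fun ξ => ?_)
    have e1 : ‖T y - T ξ‖ = ‖y - ξ‖ := by rw [← map_sub, T.norm_map]
    simp only [Ph]
    rw [← hT, e1, T.norm_map]
  have hx1 : ‖x‖ < 1 := by simpa using hx
  have hup := hUH.max_principle hn hx1 (M := U x) (fun y hy => (hrot y x (by simpa using hy)).le)
    0 (by simp)
  have hlo := (hUH.lin hUH (-1) 0).max_principle hn hx1 (M := -U x)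
    (fun y hy => by rw [hrot y x (by simpa using hy)]; linarith) 0 (by simp)
  have h0 : U 0 = 1 := by
    have : U 0 = ∫ ξ, (1 : ℝ) ∂(sphMeasure n) := by
      refine integral_congr_ae ?_
      filter_upwards [sphMeasure_ae n] with ξ hξ
      simp [Ph, mem_sphere_zero_iff_norm.1 hξ]
    rw [this]; simp
  change U x = 1
  linarith

/-- Poisson integrals of continuous data attain their boundary values uniformly. -/
theorem Ph_boundary {n : ℕ} (hn : 3 ≤ n) {P : E n → ℝ} (hP : Continuous P) {ε : ℝ} (hε : 0 < ε) :
    ∀ᶠ R : ℝ in 𝓝[<] 1, ∀ ζ ∈ sphere (0 : E n) 1,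
      |∫ ξ, Ph n (R • ζ) ξ * P ξ ∂(sphMeasure n) - P ζ| ≤ ε := by
  have hn1 : 1 ≤ n := by omega
  have := sphMeasure_prob n hn1
  have huc := (isCompact_sphere (0 : E n) 1).uniformContinuousOn_of_continuous hP.continuousOn
  obtain ⟨δ, hδ, hPδ⟩ := Metric.uniformContinuousOn_iff.1 huc (ε / 2) (by positivity)
  obtain ⟨M, hM⟩ := (isCompact_sphere (0 : E n) 1).exists_bound_of_continuousOn hP.continuousOn
  -- `c R` bounds the kernel at distance at least `δ` from `ζ`
  let c : ℝ → ℝ := fun R => (1 - R ^ 2) * (4 / δ ^ 2)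
  have ev : ∀ f : ℝ → ℝ, Continuous f → ∀ a, f 1 < a → ∀ᶠ R in 𝓝[<] (1 : ℝ), f R < a :=
    fun f hf a ha => nhdsWithin_le_nhds (hf.continuousAt.eventually_lt continuousAt_const ha)
  have e1 := ev (fun R => 1 - R) (by fun_prop) (δ / 2) (by simpa using hδ)
  have e2 := ev c (by fun_prop) 1 (by simp [c])
  have e3 := ev (fun R => c R * (2 * M)) (by fun_prop) (ε / 2) (by simpa [c] using hε)
  have e4 := ev (fun R => -R) (by fun_prop) 0 (by simp)
  filter_upwards [e1, e2, e3, e4, self_mem_nhdsWithin] with R h1 h2 h3 h4 h5 ζ hζ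
  have hR1 : R < 1 := h5
  have hR0 : 0 < R := by linarith
  have hζ1 : ‖ζ‖ = 1 := by simpa using hζ
  have hnorm : ‖R • ζ‖ = R := by rw [norm_smul, hζ1, mul_one, Real.norm_eq_abs, abs_of_pos hR0]
  have hball : R • ζ ∈ ball (0 : E n) 1 := by rw [mem_ball_zero_iff, hnorm]; exact hR1
  have iPh := sph_integrable hn1 (Ph_continuousOn hball)
  have iPhP : Integrable (fun ξ => Ph n (R • ζ) ξ * P ξ) (sphMeasure n) :=
    sph_integrable hn1 ((Ph_continuousOn hball).mul hP.continuousOn)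
  have hmass := Ph_mass hn hball
  have hdiff : ∫ ξ, Ph n (R • ζ) ξ * P ξ ∂(sphMeasure n) - P ζ =
      ∫ ξ, Ph n (R • ζ) ξ * (P ξ - P ζ) ∂(sphMeasure n) := by
    simp only [mul_sub]
    rw [integral_sub iPhP (iPh.mul_const _), integral_mul_const, hmass, one_mul]
  have hbound : ∫ ξ, (ε / 2 * Ph n (R • ζ) ξ + ε / 2) ∂(sphMeasure n) = ε := by
    rw [integral_add (iPh.const_mul _) (integrable_const _), integral_const_mul, hmass]
    simp
  rw [hdiff, ← Real.norm_eq_abs, ← hbound]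
  refine norm_integral_le_of_norm_le ((iPh.const_mul _).add (integrable_const _)) ?_
  filter_upwards [sphMeasure_ae n] with ξ hξ
  have hPh0 := Ph_nonneg (ξ := ξ) hball
  rw [norm_mul, Real.norm_eq_abs, abs_of_nonneg hPh0]
  rcases lt_or_ge (dist ξ ζ) δ with hd | hd
  · have := hPδ ξ hξ ζ hζ hd
    rw [dist_eq_norm] at this
    have := mul_le_mul_of_nonneg_left this.le hPh0
    linarith
  · have hdist : δ / 2 ≤ ‖R • ζ - ξ‖ := by
      have ha : ‖ζ - R • ζ‖ = 1 - R := by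
        have : ζ - R • ζ = (1 - R) • ζ := by rw [sub_smul, one_smul]
        rw [this, norm_smul, hζ1, mul_one, Real.norm_eq_abs, abs_of_pos (by linarith)]
      have hb : dist ξ ζ ≤ ‖R • ζ - ξ‖ + ‖ζ - R • ζ‖ := by
        rw [dist_comm, dist_eq_norm, add_comm]
        have : ζ - ξ = (ζ - R • ζ) + (R • ζ - ξ) := by abel
        rw [this]
        exact norm_add_le _ _
      linarith
    have hA : 0 ≤ 1 - R ^ 2 := by nlinarith
    have hq : (1 - ‖R • ζ‖ ^ 2) / ‖R • ζ - ξ‖ ^ 2 ≤ c R := by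
      rw [hnorm]
      have hsq : δ ^ 2 / 4 ≤ ‖R • ζ - ξ‖ ^ 2 := by nlinarith
      calc (1 - R ^ 2) / ‖R • ζ - ξ‖ ^ 2 ≤ (1 - R ^ 2) / (δ ^ 2 / 4) := by gcongr
        _ = c R := by simp only [c]; field_simp
    have hq0 : 0 ≤ (1 - ‖R • ζ‖ ^ 2) / ‖R • ζ - ξ‖ ^ 2 := by
      rw [hnorm]; positivity
    have hPhc : Ph n (R • ζ) ξ ≤ c R := by
      refine le_trans ?_ hq
      -- the quotient is at most `1`, so its power `n - 1 ≥ 1` does not exceed it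
      exact pow_le_of_le_one hq0 (hq.trans h2.le) (by omega)
    have hPM : ‖P ξ - P ζ‖ ≤ 2 * M := by
      have := norm_sub_le (P ξ) (P ζ)
      linarith [hM ξ hξ, hM ζ hζ]
    have : Ph n (R • ζ) ξ * ‖P ξ - P ζ‖ ≤ c R * (2 * M) :=
      mul_le_mul hPhc hPM (norm_nonneg _) (hPh0.trans hPhc)
    have : 0 ≤ ε / 2 * Ph n (R • ζ) ξ := by positivity
    linarith

/-- A solution tending to zero uniformly at the unit sphere vanishes in the ball. -/
theorem IsHH.eq_zero {n : ℕ} (hn : 3 ≤ n) {w : E n → ℝ} (hw : IsHH n w)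
    (hb : ∀ ε > 0, ∀ᶠ R : ℝ in 𝓝[<] 1, ∀ ζ ∈ sphere (0 : E n) 1, |w (R • ζ)| ≤ ε) :
    ∀ x ∈ ball (0 : E n) 1, w x = 0 := by
  intro x hx
  have hx1 : ‖x‖ < 1 := by simpa using hx
  rw [← abs_nonpos_iff]
  refine le_of_forall_pos_le_add fun ε hε => ?_
  have ev : ∀ᶠ R : ℝ in 𝓝[<] 1, ‖x‖ < R :=
    nhdsWithin_le_nhds (eventually_gt_nhds hx1)
  obtain ⟨R, hR, hxR, hR1⟩ := ((hb ε hε).and (ev.and self_mem_nhdsWithin)).exists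
  have hR0 : 0 < R := (norm_nonneg _).trans_lt hxR
  have hS : ∀ y ∈ sphere (0 : E n) R, |w y| ≤ ε := by
    intro y hy
    have hyR : ‖y‖ = R := by simpa using hy
    have := hR (R⁻¹ • y) (by
      rw [mem_sphere_zero_iff_norm, norm_smul, hyR, Real.norm_eq_abs,
        abs_of_pos (inv_pos.2 hR0), inv_mul_cancel₀ hR0.ne'])
    rwa [smul_smul, mul_inv_cancel₀ hR0.ne', one_smul] at this
  have hxc : x ∈ closedBall (0 : E n) R := by simpa using hxR.le
  have h1 := hw.max_principle hn hR1 (fun y hy => (abs_le.1 (hS y hy)).2) x hxc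
  have h2 := (hw.lin hw (-1) 0).max_principle hn hR1 (M := ε)
    (fun y hy => by linarith [(abs_le.1 (hS y hy)).1]) x hxc
  rw [zero_add]
  exact abs_le.2 ⟨by linarith, h1⟩

/-- The radial factor `F_l(R²) Rˡ` tends to `F_l(1)` at the boundary. -/
theorem tendsto_radial {n : ℕ} (hn : 3 ≤ n) (l : ℕ) :
    Tendsto (fun R : ℝ => Fl n l (R ^ 2) * R ^ l) (𝓝[<] 1) (𝓝 (Fl n l 1)) := by
  have h1 : Tendsto (fun R : ℝ => R ^ 2) (𝓝[<] 1) (𝓝[Icc 0 1] 1) := by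
    refine tendsto_nhdsWithin_iff.2 ⟨?_, ?_⟩
    · have : Continuous fun R : ℝ => R ^ 2 := by fun_prop
      simpa using (this.tendsto 1).mono_left nhdsWithin_le_nhds
    · have ev : ∀ᶠ R : ℝ in 𝓝[<] 1, 0 < R := nhdsWithin_le_nhds (eventually_gt_nhds zero_lt_one)
      filter_upwards [ev, self_mem_nhdsWithin] with R h0 hR1
      have hR1 : R < 1 := hR1
      exact ⟨by positivity, by nlinarith⟩
  have h2 := Tendsto.comp (continuousOn_Fl hn l 1 (by simp)) h1
  have h3 : Tendsto (fun R : ℝ => R ^ l) (𝓝[<] 1) (𝓝 1) := by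
    have : Continuous fun R : ℝ => R ^ l := by fun_prop
    simpa using (this.tendsto 1).mono_left nhdsWithin_le_nhds
  simpa using h2.mul h3

/-- If `F_l(1) = 0`, then `F_l(|x|²) P(x)` vanishes at the boundary, hence in the ball. Near the
origin `F_l ≠ 0`, so this forces `P = 0` on the sphere. -/
theorem zero_of_Fl_one_eq_zero {n : ℕ} (hn : 3 ≤ n) {l : ℕ} {P : E n → ℝ} (hP : ContDiff ℝ 2 P)
    (hharm : ∀ x : E n, lap n P x = 0)
    (hhom : ∀ (c : ℝ) (x : E n), P (c • x) = c ^ l * P x) (h1 : Fl n l 1 = 0) :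
    ∀ ζ ∈ sphere (0 : E n) 1, P ζ = 0 := by
  have hv := isHH_solid hn l hP hharm hhom
  obtain ⟨M, hM⟩ :=
    (isCompact_sphere (0 : E n) 1).exists_bound_of_continuousOn hP.continuous.continuousOn
  have ht : Tendsto (fun R : ℝ => |Fl n l (R ^ 2) * R ^ l| * M) (𝓝[<] 1) (𝓝 0) := by
    have := ((tendsto_radial hn l).abs).mul_const M
    simpa [h1] using this
  have hzero := hv.eq_zero hn fun ε hε => by
    filter_upwards [ht.eventually_lt_const hε,
      nhdsWithin_le_nhds (eventually_gt_nhds zero_lt_one)] with R hR hR0 ζ hζ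
    have hζ1 : ‖ζ‖ = 1 := by simpa using hζ
    rw [norm_smul, hζ1, mul_one, Real.norm_eq_abs, sq_abs, hhom, ← mul_assoc, abs_mul]
    exact (mul_le_mul_of_nonneg_left (hM ζ hζ) (abs_nonneg _)).trans hR.le
  intro ζ hζ
  have hζ1 : ‖ζ‖ = 1 := by simpa using hζ
  have hF : ∃ r : ℝ, 0 < r ∧ r < 1 ∧ Fl n l (r ^ 2) ≠ 0 := by
    obtain ⟨F1, F2, hF⟩ := Fl_ode hn l
    have hc : ContinuousAt (fun r : ℝ => Fl n l (r ^ 2)) 0 := by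
      have hF0 : ContinuousAt (Fl n l) ((0 : ℝ) ^ 2) := (hF _ (by simp)).1.continuousAt
      have hsq : ContinuousAt (fun r : ℝ => r ^ 2) 0 := by fun_prop
      exact ContinuousAt.comp (f := fun r : ℝ => r ^ 2) hF0 hsq
    have hne : ∀ᶠ r in 𝓝[>] (0 : ℝ), Fl n l (r ^ 2) ≠ 0 :=
      nhdsWithin_le_nhds (hc.eventually_ne (by simp [Fl_zero]))
    have hlt : ∀ᶠ r in 𝓝[>] (0 : ℝ), r < 1 := nhdsWithin_le_nhds (eventually_lt_nhds zero_lt_one)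
    obtain ⟨r, ha, hb, hc⟩ := (hne.and (hlt.and self_mem_nhdsWithin)).exists
    exact ⟨r, hc, hb, ha⟩
  obtain ⟨r, hr0, hr1, hr⟩ := hF
  have hnorm : ‖r • ζ‖ = r := by rw [norm_smul, hζ1, mul_one, Real.norm_eq_abs, abs_of_pos hr0]
  have := hzero (r • ζ) (by rw [mem_ball_zero_iff, hnorm]; exact hr1)
  rw [hnorm, hhom] at this
  simpa [hr, hr0.ne'] using this

/-! ### The Poisson integral of a spherical harmonic -/

/-- If `P` is a harmonic polynomial on `ℝⁿ`, homogeneous of degree `l`, with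
restriction `Y` to the sphere, then for `0 ≤ r < 1` and `ζ ∈ S^{n-1}`,
`∫ P_h(rζ,ξ) Y(ξ) dσ(ξ) = f_l(r²) rˡ Y(ζ)`, where `f_l = F_l / F_l(1)`. -/
theorem stmt2 (n : ℕ) (hn : 3 ≤ n) (l : ℕ) (P : E n → ℝ)
    (hpoly : ∃ q : MvPolynomial (Fin n) ℝ, ∀ x : E n, P x = MvPolynomial.eval (fun i => x i) q)
    (hharm : ∀ x : E n, lap n P x = 0)
    (hhom : ∀ (c : ℝ) (x : E n), P (c • x) = c ^ l * P x) :
    ∀ r ∈ Ico (0 : ℝ) 1, ∀ ζ ∈ sphere (0 : E n) 1,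
      ∫ ξ, Ph n (r • ζ) ξ * P ξ ∂(sphMeasure n) = (Fl n l (r ^ 2) / Fl n l 1) * r ^ l * P ζ := by
  intro r hr ζ hζ
  have hP := contDiff_of_poly hpoly
  by_cases hC : Fl n l 1 = 0
  -- here the quotient by `F_l(1)` is the junk value `0`, but then both sides vanish anyway
  · have hz := zero_of_Fl_one_eq_zero hn hP hharm hhom hC
    rw [hz ζ hζ, mul_zero]
    refine integral_eq_zero_of_ae ?_
    filter_upwards [sphMeasure_ae n] with ξ hξ
    simp [hz ξ hξ]
  · have hv := isHH_solid hn l hP hharm hhom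
    have hu := isHH_integral hn hP.continuous
    obtain ⟨M, hM⟩ :=
      (isCompact_sphere (0 : E n) 1).exists_bound_of_continuousOn hP.continuous.continuousOn
    have ht : Tendsto (fun R : ℝ => |1 - (Fl n l 1)⁻¹ * (Fl n l (R ^ 2) * R ^ l)| * M)
        (𝓝[<] 1) (𝓝 0) := by
      have := ((((tendsto_radial hn l).const_mul (Fl n l 1)⁻¹).const_sub 1).abs).mul_const M
      simpa [hC] using this
    -- the difference of both sides is a solution with zero boundary values
    have hw := (hu.lin hv 1 (-(Fl n l 1)⁻¹)).eq_zero hn fun ε hε => by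
      filter_upwards [Ph_boundary hn hP.continuous (half_pos hε),
        ht.eventually_lt_const (half_pos hε)] with R hR1 hR2 ξ hξ
      have hξ1 : ‖ξ‖ = 1 := by simpa using hξ
      have h1 := hR1 ξ hξ
      rw [norm_smul, hξ1, mul_one, Real.norm_eq_abs, sq_abs, hhom]
      have h2 : |(1 - (Fl n l 1)⁻¹ * (Fl n l (R ^ 2) * R ^ l)) * P ξ| ≤ ε / 2 := by
        rw [abs_mul]
        exact (mul_le_mul_of_nonneg_left (hM ξ hξ) (abs_nonneg _)).trans hR2.le
      refine le_trans (le_of_eq ?_) ((abs_add_le _ _).trans (add_le_add h1 h2) |>.trans_eq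
        (add_halves ε))
      congr 1
      ring
    have hζ1 : ‖ζ‖ = 1 := by simpa using hζ
    have hnorm : ‖r • ζ‖ = r := by
      rw [norm_smul, hζ1, mul_one, Real.norm_eq_abs, abs_of_nonneg hr.1]
    have h := hw (r • ζ) (by rw [mem_ball_zero_iff, hnorm]; exact hr.2)
    rw [hnorm, hhom] at h
    rw [div_eq_inv_mul]
    linear_combination h
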